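/- Let P = (P⁻ ∪ P⁺, ≤) be an oriented mirror poset and let S, T be complete closed subsets. Define S ⊑ T iff d(P⁻, T) = d(P⁻, S) + d(S, T), where d(A,B) = |A ∖ B| = |B ∖ A| for complete closed subsets A, B. Then S ⊑ T if and only if S ∩ P⁺ ⊆ T ∩ P⁺. -/

import Mathlib

/-! The trace `S ↦ S ∩ P⁺` turns the distance between complete sets into the Hamming distance
`|A ∆ B|`: the part of `T ∖ S` inside `P⁻` is carried by the involution to the part of `S ∖ T`
inside `P⁺`. The base point `P⁻` has empty trace, so `P⁻, S, T` lie on a geodesic iff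
`|B| = |A| + |A ∆ B|` for the traces `A` of `S` and `B` of `T`. As `|A| + |A ∆ B|` exceeds `|B|` by
`2 |A ∖ B|`, this means `A ⊆ B`. -/

open scoped symmDiff

section Hamming

variable {α : Type*} (A B : Set α)

theorem encard_symmDiff : (A ∆ B).encard = (A \ B).encard + (B \ A).encard :=
  Set.encard_union_eq disjoint_sdiff_sdiff

theorem encard_add_encard_symmDiff :
    A.encard + (A ∆ B).encard = B.encard + 2 * (A \ B).encard :=
  calc A.encard + (A ∆ B).encard
    _ = ((B \ A).encard + A.encard) + (A \ B).encard := by rw [encard_symmDiff]; ring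
    _ = ((A \ B).encard + B.encard) + (A \ B).encard := by
      rw [Set.encard_sdiff_add_encard, Set.encard_sdiff_add_encard, Set.union_comm]
    _ = B.encard + 2 * (A \ B).encard := by ring

variable {A B}

theorem encard_eq_encard_add_encard_symmDiff_iff_subset (hB : B.Finite) :
    B.encard = A.encard + (A ∆ B).encard ↔ A ⊆ B := by
  have hB_ne_top : B.encard ≠ ⊤ := hB.encard_lt_top.ne
  calc B.encard = A.encard + (A ∆ B).encard
    _ ↔ B.encard + 0 = B.encard + 2 * (A \ B).encard := by
      rw [encard_add_encard_symmDiff, add_zero]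
    _ ↔ 0 = 2 * (A \ B).encard :=
      (ENat.add_right_injective_of_ne_top hB_ne_top).eq_iff
    _ ↔ A ⊆ B := by simp [eq_comm (a := (0 : ℕ∞)), Set.sdiff_eq_empty]

end Hamming

/-- `S` contains exactly one of `a` and `bar a`, for every `a`. This is the completeness condition
on subsets of a mirror poset, stated for an arbitrary map `bar` in the role of the duality. -/
def IsMirrorComplete {α : Type*} (bar : α → α) (S : Set α) : Prop :=
  ∀ a, a ∈ S ↔ bar a ∉ S

namespace IsMirrorComplete

variable {α : Type*} {bar : α → α} {P S T : Set α}

theorem mapsTo_compl (hS : IsMirrorComplete bar S) : Set.MapsTo bar S Sᶜ :=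
  fun a ↦ (hS a).1

theorem compl_mapsTo (hS : IsMirrorComplete bar S) : Set.MapsTo bar Sᶜ S :=
  fun a ha ↦ not_not.1 (mt (hS a).2 ha)

theorem mapsTo_sdiff (hS : IsMirrorComplete bar S) (hT : IsMirrorComplete bar T) :
    Set.MapsTo bar (S \ T) (T \ S) :=
  fun _ ha ↦ ⟨hT.compl_mapsTo ha.2, hS.mapsTo_compl ha.1⟩

theorem encard_sdiff_inter_eq_encard_sdiff_inter_compl (hbar : Function.Injective bar)
    (hP : IsMirrorComplete bar P) (hS : IsMirrorComplete bar S) (hT : IsMirrorComplete bar T) :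
    ((T \ S) ∩ P).encard = ((S \ T) ∩ Pᶜ).encard :=
  le_antisymm
    (Set.encard_le_encard_of_injOn ((hT.mapsTo_sdiff hS).inter_inter hP.mapsTo_compl) hbar.injOn)
    (Set.encard_le_encard_of_injOn ((hS.mapsTo_sdiff hT).inter_inter hP.compl_mapsTo) hbar.injOn)

theorem encard_sdiff_eq_encard_symmDiff (hbar : Function.Injective bar)
    (hP : IsMirrorComplete bar P) (hS : IsMirrorComplete bar S) (hT : IsMirrorComplete bar T) :
    (T \ S).encard = ((S ∩ Pᶜ) ∆ (T ∩ Pᶜ)).encard :=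
  calc (T \ S).encard
    _ = ((T \ S) ∩ P).encard + ((T \ S) ∩ Pᶜ).encard := by
      rw [← Set.sdiff_eq, add_comm, Set.encard_sdiff_add_encard_inter]
    _ = ((S \ T) ∩ Pᶜ).encard + ((T \ S) ∩ Pᶜ).encard := by
      rw [encard_sdiff_inter_eq_encard_sdiff_inter_compl hbar hP hS hT]
    _ = ((S ∩ Pᶜ) ∆ (T ∩ Pᶜ)).encard := by
      rw [encard_symmDiff, Set.inter_sdiff_distrib_right, Set.inter_sdiff_distrib_right]

end IsMirrorComplete

theorem stmt5_general {α : Type*} {bar : α → α} (hbar : Function.Injective bar) {P S T : Set α}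
    (hP : IsMirrorComplete bar P) (hS : IsMirrorComplete bar S) (hT : IsMirrorComplete bar T)
    (hTP : (T \ P).Finite) :
    (T \ P).encard = (S \ P).encard + (T \ S).encard ↔ S ∩ Pᶜ ⊆ T ∩ Pᶜ := by
  rw [IsMirrorComplete.encard_sdiff_eq_encard_symmDiff hbar hP hS hT]
  exact encard_eq_encard_add_encard_symmDiff_iff_subset hTP

/-- In an oriented mirror poset with base `P⁻ = Pm`, for complete closed subsets
`S`, `T`, with `d(A,B) = |B ∖ A|`:
`d(P⁻,T) = d(P⁻,S) + d(S,T)` iff `S ∩ P⁺ ⊆ T ∩ P⁺`. -/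
theorem stmt5 {α : Type*} [PartialOrder α] [Finite α] (bar : α → α)
    (hinv : ∀ a, bar (bar a) = a)
    (hne : ∀ a, bar a ≠ a)
    (hincomp : ∀ a : α, ¬ a ≤ bar a ∧ ¬ bar a ≤ a)
    (hmirror : ∀ a b : α, a ≤ b ↔ bar b ≤ bar a)
    (Pm : Set α)
    (hPmClosed : IsLowerSet Pm)
    (hPmComplete : ∀ a, a ∈ Pm ↔ bar a ∉ Pm)
    (S T : Set α)
    (hSclosed : IsLowerSet S) (hScomplete : ∀ a, a ∈ S ↔ bar a ∉ S)
    (hTclosed : IsLowerSet T) (hTcomplete : ∀ a, a ∈ T ↔ bar a ∉ T) :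
    (T \ Pm).ncard = (S \ Pm).ncard + (T \ S).ncard ↔ S ∩ Pmᶜ ⊆ T ∩ Pmᶜ := by
  have hbar : Function.Injective bar := Function.Involutive.injective hinv
  have h := stmt5_general hbar hPmComplete hScomplete hTcomplete (Set.toFinite (T \ Pm))
  simpa only [← Set.Finite.cast_ncard_eq (Set.toFinite _), ← Nat.cast_add, Nat.cast_inj] using h
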